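/- Let n ≥ 1 and p = 1 + 2/n. There exists ε > 0 with the following property: if φ is a measurable function on ℝ^n such that for some K ≥ 0 one has |φ(x)| ≤ ε |x|^{−n} [log(e + 1/|x|)]^{−n/2−1} + K for a.e. x ∈ ℝ^n, then there exists T > 0 and a solution u of the semilinear heat equation ∂_t u − Δu = |u|^{p−1}u on ℝ^n × (0,T) with initial data φ (in the Duhamel integral sense). -/

import Mathlib

open MeasureTheory Real Set ENNReal

noncomputable def logFac (s : ℝ) : ℝ := Real.log (Real.exp 1 + 1 / s)

noncomputable def zygNorm (n : ℕ) (q α : ℝ)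
    (f : EuclideanSpace ℝ (Fin n) → ℝ) : ℝ≥0∞ :=
  ⨆ s : Set.Ioi (0 : ℝ),
    (ENNReal.ofReal (logFac s.1) ^ α *
      ⨆ E : {E : Set (EuclideanSpace ℝ (Fin n)) //
          MeasurableSet E ∧ volume E = ENNReal.ofReal s.1},
        ∫⁻ x in E.1, ENNReal.ofReal (|f x| ^ q)) ^ (1 / q)

noncomputable def zygNormUL (n : ℕ) (q α ρ : ℝ)
    (f : EuclideanSpace ℝ (Fin n) → ℝ) : ℝ≥0∞ :=
  ⨆ z : EuclideanSpace ℝ (Fin n),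
    zygNorm n q α ((Metric.ball z ρ).indicator f)

noncomputable def heatKernel (n : ℕ) (x : EuclideanSpace ℝ (Fin n)) (t : ℝ) : ℝ :=
  (4 * Real.pi * t) ^ (-(n : ℝ) / 2) * Real.exp (-‖x‖ ^ 2 / (4 * t))

/-- `u` is a solution of `∂ₜu − Δu = |u|^{p−1}u` on `ℝ^n × (0,T)` with initial data `φ`,
in the Duhamel integral sense. -/
def IsSolution (n : ℕ) (p T : ℝ) (φ : EuclideanSpace ℝ (Fin n) → ℝ)
    (u : EuclideanSpace ℝ (Fin n) → ℝ → ℝ) : Prop :=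
  Measurable (fun q : EuclideanSpace ℝ (Fin n) × ℝ => u q.1 q.2) ∧
  ∀ᵐ q : EuclideanSpace ℝ (Fin n) × ℝ
      ∂(volume.prod (volume.restrict (Set.Ioo 0 T))),
    Integrable (fun y => heatKernel n (q.1 - y) q.2 * φ y) volume ∧
    Integrable (fun ys : EuclideanSpace ℝ (Fin n) × ℝ =>
        heatKernel n (q.1 - ys.1) (q.2 - ys.2) * (|u ys.1 ys.2| ^ (p - 1) * u ys.1 ys.2))
      (volume.prod (volume.restrict (Set.Ioo 0 q.2))) ∧
    u q.1 q.2 = (∫ y, heatKernel n (q.1 - y) q.2 * φ y) +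
      ∫ s in Set.Ioo 0 q.2, ∫ y,
        heatKernel n (q.1 - y) (q.2 - s) * (|u y s| ^ (p - 1) * u y s)

/-!
Write `L = log (1 / t)`, let `h` be the datum `|y| ^ (-n) * (log (1 / |y|)) ^ (-1 - a)` near `0` for
some `0 < a < n / 2`, and set `c = n / 2 - a`. Since `h` is integrable, with logarithmically small
mass on small balls, `S(t) h` is at most a constant times `t ^ (-n / 2) * L ^ (-a)`. Hence
`z = L ^ (-c) * S(t) h` satisfies `z ^ (2 / n) ≤ C / (t * L)`, and because
`S(t - s) S(s) h = S(t) h` the Duhamel integral of `z ^ (1 + 2 / n)` is at most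
`C * S(t) h * ∫₀ᵗ ds / (s * log (1 / s) ^ (1 + c)) = (C / c) * z`.
So small multiples of `z` absorb their own nonlinear term, while for every `β > 0` they dominate the
flow of the given singularity up to a multiple of `t ^ (-β)`. This yields the supersolution
`2 * (e * z + κ * t ^ (-β))` for the datum `|φ|`, with `e` small and the time interval short.
The nonlinearity is increasing, so the iteration of the Duhamel map from minus this supersolution
increases, and its limit is a solution.
-/

section ExtendedNonnegativeReals

lemma rpow_sub_one_mul_self {p : ℝ} (hp : 1 ≤ p) (r : ℝ≥0∞) : r ^ (p - 1) * r = r ^ p := by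
  conv_lhs => rw [← ENNReal.rpow_one r, ← ENNReal.rpow_mul]
  rw [one_mul, ← ENNReal.rpow_add_of_nonneg _ _ (sub_nonneg.2 hp) zero_le_one, sub_add_cancel]

lemma two_mul_add_rpow_le {p : ℝ} (hp : 0 ≤ p) (a b : ℝ≥0∞) :
    (2 * (a + b)) ^ p ≤ 4 ^ p * (a ^ p + b ^ p) := by
  wlog hab : a ≤ b generalizing a b
  · simpa only [add_comm] using this b a (le_of_not_ge hab)
  calc (2 * (a + b)) ^ p ≤ (2 * (b + b)) ^ p := by gcongr
    _ = 4 ^ p * b ^ p := by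
        rw [← two_mul, ← mul_assoc, ENNReal.mul_rpow_of_nonneg _ _ hp]
        norm_num
    _ ≤ 4 ^ p * (a ^ p + b ^ p) := by
        gcongr
        exact le_add_self

lemma exists_pos_mul_ofReal_rpow_le_one {C : ℝ≥0∞} {q : ℝ} (hC : C ≠ ∞) (hq : 0 < q) :
    ∃ ε : ℝ, 0 < ε ∧ ε < 1 ∧ C * ENNReal.ofReal ε ^ q ≤ 1 := by
  have hlim : Filter.Tendsto (fun ε : ℝ => C * ENNReal.ofReal ε ^ q) (nhds 0) (nhds 0) := by
    have h := ENNReal.Tendsto.const_mul (a := C)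
      (((ENNReal.continuous_rpow_const (y := q)).comp ENNReal.continuous_ofReal).tendsto 0)
      (Or.inr hC)
    simpa [Function.comp_def, ENNReal.zero_rpow_of_pos hq] using h
  have hsmall : ∀ᶠ ε : ℝ in nhdsWithin 0 (Ioi 0), C * ENNReal.ofReal ε ^ q ≤ 1 :=
    (hlim.eventually_le_const zero_lt_one).filter_mono nhdsWithin_le_nhds
  obtain ⟨ε, hε, hε0, hε1⟩ := (hsmall.and (Ioo_mem_nhdsGT zero_lt_one)).exists
  exact ⟨ε, hε0, hε1, hε⟩

end ExtendedNonnegativeReals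

section Measure

variable {α β : Type*} [MeasurableSpace α] [MeasurableSpace β]

lemma prod_restrict_eq_restrict_univ_prod (μ : Measure α) (ν : Measure β) [SFinite μ] [SFinite ν]
    (t : Set β) : μ.prod (ν.restrict t) = (μ.prod ν).restrict (univ ×ˢ t) := by
  rw [← Measure.prod_restrict, Measure.restrict_univ]

lemma ae_prod_restrict_of_forall_mem {μ : Measure α} {ν : Measure β} [SFinite μ] [SFinite ν]
    {t : Set β} (ht : MeasurableSet t) {P : α × β → Prop} (h : ∀ a, ∀ b ∈ t, P (a, b)) :
    ∀ᵐ q ∂μ.prod (ν.restrict t), P q := by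
  rw [prod_restrict_eq_restrict_univ_prod]
  exact ae_restrict_of_forall_mem (MeasurableSet.univ.prod ht) fun q hq => h q.1 q.2 hq.2

lemma measurable_setIntegral_prodMk_preimage {ν : Measure β} [SFinite ν] {s : Set (α × β)}
    (hs : MeasurableSet s) {f : α × β → ℝ} (hf : Measurable f) :
    Measurable fun a => ∫ b in Prod.mk a ⁻¹' s, f (a, b) ∂ν := by
  have hind : Measurable fun a => ∫ b, s.indicator f (a, b) ∂ν :=
    (hf.indicator hs).stronglyMeasurable.integral_prod_right'.measurable
  convert hind using 2 with a
  exact (integral_indicator (measurable_prodMk_left hs)).symm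

lemma lintegral_Ioo_deriv_of_nonneg {g g' : ℝ → ℝ} {a b : ℝ} (hab : a ≤ b)
    (hcont : ContinuousOn g (Icc a b)) (hderiv : ∀ r ∈ Ioo a b, HasDerivAt g (g' r) r)
    (hnonneg : ∀ r ∈ Ioo a b, 0 ≤ g' r) :
    ∫⁻ r in Ioo a b, ENNReal.ofReal (g' r) = ENNReal.ofReal (g b - g a) := by
  have hintegral : IntegrableOn g' (Ioc a b) :=
    intervalIntegral.integrableOn_deriv_of_nonneg hcont hderiv hnonneg
  rw [← ofReal_integral_eq_lintegral_ofReal (hintegral.mono_set Ioo_subset_Ioc_self)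
      (ae_restrict_of_forall_mem measurableSet_Ioo hnonneg),
    ← integral_Ioc_eq_integral_Ioo, ← intervalIntegral.integral_of_le hab,
    intervalIntegral.integral_eq_sub_of_hasDerivAt_of_le hab hcont hderiv
      ((intervalIntegrable_iff_integrableOn_Ioc_of_le hab).2 hintegral)]

lemma lintegral_fun_norm_addHaar {E : Type*} [NormedAddCommGroup E] [NormedSpace ℝ E]
    [FiniteDimensional ℝ E] [Nontrivial E] [MeasurableSpace E] [BorelSpace E] (μ : Measure E)
    [μ.IsAddHaarMeasure] {f : ℝ → ℝ≥0∞} (hf : Measurable f) :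
    ∫⁻ x, f ‖x‖ ∂μ = Module.finrank ℝ E * μ (Metric.ball 0 1) *
      ∫⁻ r in Ioi (0 : ℝ), ENNReal.ofReal (r ^ (Module.finrank ℝ E - 1)) * f r :=
  calc
    ∫⁻ x, f ‖x‖ ∂μ = ∫⁻ x : ({(0)}ᶜ : Set E), f ‖x.1‖ ∂(μ.comap (↑)) := by
      rw [lintegral_subtype_comap (measurableSet_singleton _).compl fun x => f ‖x‖,
        restrict_compl_singleton]
    _ = ∫⁻ x, f x.2 ∂μ.toSphere.prod (.volumeIoiPow (Module.finrank ℝ E - 1)) := by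
      simpa using μ.measurePreserving_homeomorphUnitSphereProd.lintegral_comp_emb
        (Homeomorph.measurableEmbedding _) (f ∘ Subtype.val ∘ Prod.snd)
    _ = μ.toSphere univ * ∫⁻ r : Ioi (0 : ℝ), f r ∂.volumeIoiPow (Module.finrank ℝ E - 1) := by
      rw [lintegral_prod _ (by fun_prop)]
      simp only [lintegral_const]
      exact mul_comm _ _
    _ = _ := by
      rw [μ.toSphere_apply_univ, Measure.volumeIoiPow,
        lintegral_withDensity_eq_lintegral_mul _ (by fun_prop) (by fun_prop),
        ← lintegral_subtype_comap measurableSet_Ioi]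
      rfl

end Measure

section Logarithm

lemma continuousOn_neg_log_rpow_neg {a R : ℝ} (ha : 0 < a) (hR : R < 1) :
    ContinuousOn (fun r : ℝ => (-Real.log r) ^ (-a)) (Icc 0 R) := by
  intro r hr
  apply ContinuousAt.continuousWithinAt
  rcases hr.1.eq_or_lt with rfl | hr0
  · have htop : Filter.Tendsto (fun r => -Real.log r) (nhdsWithin 0 {0}ᶜ) Filter.atTop :=
      Filter.tendsto_neg_atBot_atTop.comp Real.tendsto_log_nhdsNE_zero
    rw [continuousAt_iff_punctured_nhds]
    simpa [Real.zero_rpow (neg_ne_zero.2 ha.ne'), Function.comp_def] using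
      (tendsto_rpow_neg_atTop ha).comp htop
  · have hlog : Real.log r < 0 := Real.log_neg hr0 (hr.2.trans_lt hR)
    exact (Real.continuousAt_log hr0.ne').neg.rpow_const (Or.inl (neg_ne_zero.2 hlog.ne))

lemma hasDerivAt_neg_log_rpow_neg_div {a r : ℝ} (ha : a ≠ 0) (hr0 : 0 < r) (hr1 : r < 1) :
    HasDerivAt (fun r : ℝ => (-Real.log r) ^ (-a) / a) (r⁻¹ * (-Real.log r) ^ (-1 - a)) r := by
  have hlog : Real.log r < 0 := Real.log_neg hr0 hr1
  have hneglog : HasDerivAt (fun r => -Real.log r) (-r⁻¹) r := (Real.hasDerivAt_log hr0.ne').neg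
  have hderiv := (hneglog.rpow_const (p := -a) (Or.inl (neg_ne_zero.2 hlog.ne))).div_const a
  have hvalue : -r⁻¹ * -a * (-Real.log r) ^ (-a - 1) / a = r⁻¹ * (-Real.log r) ^ (-1 - a) := by
    rw [show -a - 1 = -1 - a by ring]
    field_simp
  rwa [hvalue] at hderiv

lemma lintegral_Ioo_inv_mul_neg_log_rpow {a R : ℝ} (ha : 0 < a) (hR0 : 0 ≤ R) (hR1 : R < 1) :
    ∫⁻ r in Ioo 0 R, ENNReal.ofReal (r⁻¹ * (-Real.log r) ^ (-1 - a)) =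
      ENNReal.ofReal ((-Real.log R) ^ (-a) / a) := by
  rw [lintegral_Ioo_deriv_of_nonneg hR0 ((continuousOn_neg_log_rpow_neg ha hR1).div_const a)
    (fun r hr => hasDerivAt_neg_log_rpow_neg_div ha.ne' hr.1 (hr.2.trans hR1))]
  · simp [Real.zero_rpow (neg_ne_zero.2 ha.ne')]
  · intro r hr
    have hlog : Real.log r < 0 := Real.log_neg hr.1 (hr.2.trans hR1)
    exact mul_nonneg (inv_nonneg.2 hr.1.le) (Real.rpow_nonneg (by linarith) _)

lemma lintegral_Ioo_rpow {r t : ℝ} (hr : -1 < r) (ht : 0 ≤ t) :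
    ∫⁻ s in Ioo 0 t, ENNReal.ofReal (s ^ r) = ENNReal.ofReal (t ^ (r + 1) / (r + 1)) := by
  have hr' : 0 < r + 1 := by linarith
  rw [lintegral_Ioo_deriv_of_nonneg (g := fun s => s ^ (r + 1) / (r + 1)) ht]
  · simp [Real.zero_rpow hr'.ne']
  · exact (continuousOn_id.rpow_const fun _ _ => Or.inr hr'.le).div_const _
  · intro s hs
    have hderiv := (Real.hasDerivAt_rpow_const (p := r + 1) (Or.inl hs.1.ne')).div_const (r + 1)
    rwa [add_sub_cancel_right, mul_div_cancel_left₀ _ hr'.ne'] at hderiv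
  · exact fun s hs => Real.rpow_nonneg hs.1.le r

lemma neg_log_pos {t : ℝ} (ht0 : 0 < t) (ht1 : t < 1) : 0 < -Real.log t :=
  neg_pos.2 (Real.log_neg ht0 ht1)

lemma neg_log_rpow_rpow {q θ t : ℝ} (hθ : 0 ≤ θ) (ht0 : 0 < t) (ht1 : t < 1) :
    (-Real.log (t ^ θ)) ^ q = θ ^ q * (-Real.log t) ^ q := by
  rw [Real.log_rpow ht0, ← mul_neg, Real.mul_rpow hθ (neg_log_pos ht0 ht1).le]

lemma mul_neg_log_le_one {t : ℝ} (ht0 : 0 < t) (ht1 : t < 1) : t * -Real.log t ≤ 1 := by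
  have hlog := (abs_lt.1 (Real.abs_log_mul_self_lt t ht0 ht1.le)).1
  linarith

lemma rpow_le_mul_neg_log_rpow_neg {a δ t : ℝ} (ha : 0 < a) (hδ : 0 < δ) (ht0 : 0 < t)
    (ht1 : t < 1) : t ^ δ ≤ (a / δ) ^ a * (-Real.log t) ^ (-a) := by
  have hL : 0 < -Real.log t := neg_log_pos ht0 ht1
  have hbound : -Real.log t * t ^ (δ / a) ≤ a / δ := by
    have hlog := (abs_lt.1 (Real.abs_log_mul_self_rpow_lt t (δ / a) ht0 ht1.le (by positivity))).1
    rw [one_div_div] at hlog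
    linarith
  rw [Real.rpow_neg hL.le, ← div_eq_mul_inv, le_div_iff₀ (by positivity)]
  calc t ^ δ * (-Real.log t) ^ a = (-Real.log t * t ^ (δ / a)) ^ a := by
        rw [Real.mul_rpow hL.le (by positivity), ← Real.rpow_mul ht0.le, div_mul_cancel₀ _ ha.ne',
          mul_comm]
    _ ≤ (a / δ) ^ a := by gcongr

end Logarithm

section LogSingularity

/-- The profile `r ^ (-d) * (log (1 / r)) ^ (-1 - a)`, cut off at `r = exp (-1)` so that the
logarithm stays at least `1`. In dimension `d` it is radially integrable exactly when `0 < a`. -/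
noncomputable def logSingularity (d a r : ℝ) : ℝ :=
  if r < Real.exp (-1) then r ^ (-d) * (-Real.log r) ^ (-1 - a) else 0

variable {d a c r ρ : ℝ}

lemma measurable_logSingularity (d a : ℝ) : Measurable (logSingularity d a) :=
  Measurable.ite measurableSet_Iio (by fun_prop) (by fun_prop)

lemma one_lt_neg_log_of_lt_exp_neg_one (hr : 0 < r) (hr1 : r < Real.exp (-1)) :
    1 < -Real.log r := by
  linarith [(Real.log_lt_iff_lt_exp hr).2 hr1]

lemma logSingularity_zero (hd : d ≠ 0) (a : ℝ) : logSingularity d a 0 = 0 := by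
  simp [logSingularity, Real.zero_rpow (neg_ne_zero.2 hd)]

lemma logSingularity_nonneg (d a : ℝ) (hr : 0 ≤ r) : 0 ≤ logSingularity d a r := by
  unfold logSingularity
  split_ifs with h
  · have hlog : Real.log r ≤ 0 :=
      Real.log_nonpos hr (h.le.trans (Real.exp_le_one_iff.2 (by norm_num)))
    exact mul_nonneg (Real.rpow_nonneg hr _) (Real.rpow_nonneg (by linarith) _)
  · exact le_rfl

lemma logSingularity_le_rpow_neg (hd : 0 ≤ d) (ha : 0 ≤ a) (hρ : 0 < ρ) (hr : ρ ≤ r) :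
    logSingularity d a r ≤ ρ ^ (-d) := by
  unfold logSingularity
  split_ifs with h
  · have hlog : (-Real.log r) ^ (-1 - a) ≤ 1 := Real.rpow_le_one_of_one_le_of_nonpos
      (one_lt_neg_log_of_lt_exp_neg_one (hρ.trans_le hr) h).le (by linarith)
    calc r ^ (-d) * (-Real.log r) ^ (-1 - a) ≤ r ^ (-d) * 1 := by
          have := hρ.le.trans hr
          gcongr
      _ ≤ ρ ^ (-d) := by
          rw [mul_one]
          exact Real.rpow_le_rpow_of_nonpos hρ hr (by linarith)
  · positivity

lemma logSingularity_add_le_mul (hd : d ≠ 0) (hc : 0 ≤ c) (hr : 0 ≤ r) (hrρ : r ≤ ρ) (hρ : ρ < 1) :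
    logSingularity d (a + c) r ≤ (-Real.log ρ) ^ (-c) * logSingularity d a r := by
  rcases hr.eq_or_lt with rfl | hr
  · simp [logSingularity_zero hd]
  unfold logSingularity
  split_ifs with h
  · have hLρ : 0 < -Real.log ρ := neg_log_pos (hr.trans_le hrρ) hρ
    have hLr : -Real.log ρ ≤ -Real.log r := neg_le_neg (Real.log_le_log hr hrρ)
    have hpow : (-Real.log r) ^ (-c) ≤ (-Real.log ρ) ^ (-c) :=
      Real.rpow_le_rpow_of_nonpos hLρ hLr (by linarith)
    have hLr0 : 0 < -Real.log r := hLρ.trans_le hLr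
    rw [show -1 - (a + c) = -c + (-1 - a) by ring, Real.rpow_add hLr0, mul_left_comm]
    gcongr
  · simp

lemma logSingularity_add_le (hd : 0 < d) (ha : 0 ≤ a) (hc : 0 ≤ c) (hr : 0 ≤ r) (hρ0 : 0 < ρ)
    (hρ1 : ρ < 1) :
    logSingularity d (a + c) r ≤ (-Real.log ρ) ^ (-c) * logSingularity d a r + ρ ^ (-d) := by
  have hnonneg : 0 ≤ (-Real.log ρ) ^ (-c) * logSingularity d a r :=
    mul_nonneg (Real.rpow_nonneg (neg_log_pos hρ0 hρ1).le _) (logSingularity_nonneg d a hr)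
  have hρd : 0 ≤ ρ ^ (-d) := by positivity
  rcases le_total r ρ with h | h
  · linarith [logSingularity_add_le_mul (a := a) hd.ne' hc hr h hρ1]
  · linarith [logSingularity_le_rpow_neg hd.le (add_nonneg ha hc) hρ0 h]

lemma neg_log_le_logFac (hr : 0 < r) : -Real.log r ≤ logFac r := by
  rw [logFac, ← Real.log_inv, ← one_div]
  exact Real.log_le_log (by positivity) (by linarith [Real.exp_pos 1])

lemma one_le_logFac (hr : 0 ≤ r) : 1 ≤ logFac r := by
  rw [logFac, Real.le_log_iff_exp_le (by positivity)]
  linarith [one_div_nonneg.2 hr]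

lemma rpow_neg_mul_logFac_rpow_le (hd : 0 < d) (ha : 0 ≤ a) (hr : 0 ≤ r) :
    r ^ (-d) * logFac r ^ (-1 - a) ≤ logSingularity d a r + Real.exp d := by
  rcases hr.eq_or_lt with rfl | hr
  · simp [logSingularity_zero hd.ne', Real.zero_rpow (neg_ne_zero.2 hd.ne'), Real.exp_nonneg]
  unfold logSingularity
  split_ifs with h
  · have hlog : 0 < -Real.log r := zero_lt_one.trans (one_lt_neg_log_of_lt_exp_neg_one hr h)
    have hpow : logFac r ^ (-1 - a) ≤ (-Real.log r) ^ (-1 - a) :=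
      Real.rpow_le_rpow_of_nonpos hlog (neg_log_le_logFac hr) (by linarith)
    have hexp := Real.exp_nonneg d
    have : r ^ (-d) * logFac r ^ (-1 - a) ≤ r ^ (-d) * (-Real.log r) ^ (-1 - a) := by gcongr
    linarith
  · have hpow : r ^ (-d) ≤ Real.exp d :=
      calc r ^ (-d) ≤ Real.exp (-1) ^ (-d) :=
            Real.rpow_le_rpow_of_nonpos (Real.exp_pos _) (not_lt.1 h) (by linarith)
        _ = Real.exp d := by rw [← Real.exp_mul, neg_one_mul, neg_neg]
    have hlog : logFac r ^ (-1 - a) ≤ 1 :=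
      Real.rpow_le_one_of_one_le_of_nonpos (one_le_logFac hr.le) (by linarith)
    rw [zero_add]
    exact (mul_le_of_le_one_right (by positivity) hlog).trans hpow

lemma pow_mul_logSingularity_le {N : ℕ} (hN : 1 ≤ N) (hr0 : 0 < r) (hr1 : r < 1) :
    r ^ (N - 1) * logSingularity N a r ≤ r⁻¹ * (-Real.log r) ^ (-1 - a) := by
  have hL : 0 < -Real.log r := neg_log_pos hr0 hr1
  have hpow : r ^ (N - 1) * r ^ (-(N : ℝ)) = r⁻¹ := by
    rw [← Real.rpow_natCast, ← Real.rpow_add hr0, Nat.cast_sub hN, Nat.cast_one,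
      show (N : ℝ) - 1 + -N = -1 by ring, Real.rpow_neg_one]
  unfold logSingularity
  split_ifs
  · rw [← mul_assoc, hpow]
  · rw [mul_zero]
    positivity

lemma lintegral_ball_logSingularity_le {E : Type*} [NormedAddCommGroup E] [NormedSpace ℝ E]
    [FiniteDimensional ℝ E] [Nontrivial E] [MeasurableSpace E] [BorelSpace E] (μ : Measure E)
    [μ.IsAddHaarMeasure] (ha : 0 < a) (hρ0 : 0 ≤ ρ) (hρ1 : ρ < 1) :
    ∫⁻ y in Metric.ball 0 ρ, ENNReal.ofReal (logSingularity (Module.finrank ℝ E) a ‖y‖) ∂μ ≤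
      Module.finrank ℝ E * μ (Metric.ball 0 1) * ENNReal.ofReal ((-Real.log ρ) ^ (-a) / a) := by
  set N := Module.finrank ℝ E
  have hN : 1 ≤ N := Module.finrank_pos
  let f : ℝ → ℝ≥0∞ := (Iio ρ).indicator fun r => ENNReal.ofReal (logSingularity N a r)
  have hf : Measurable f :=
    (measurable_logSingularity N a).ennreal_ofReal.indicator measurableSet_Iio
  have hball : ∀ y : E, (Metric.ball 0 ρ).indicator
      (fun y => ENNReal.ofReal (logSingularity N a ‖y‖)) y = f ‖y‖ := by
    intro y
    simp [f, indicator]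
  have hradial : ∀ r ∈ Ioi (0 : ℝ), ENNReal.ofReal (r ^ (N - 1)) * f r ≤
      (Ioo 0 ρ).indicator (fun r => ENNReal.ofReal (r⁻¹ * (-Real.log r) ^ (-1 - a))) r := by
    intro r hr
    have hr : 0 < r := hr
    by_cases hrρ : r < ρ
    · rw [indicator_of_mem (show r ∈ Ioo 0 ρ from ⟨hr, hrρ⟩),
        show f r = ENNReal.ofReal (logSingularity N a r) from
          indicator_of_mem (show r ∈ Iio ρ from hrρ) _, ← ENNReal.ofReal_mul (by positivity)]
      exact ENNReal.ofReal_le_ofReal (pow_mul_logSingularity_le hN hr (hrρ.trans hρ1))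
    · simp [f, hrρ]
  rw [← lintegral_indicator measurableSet_ball, lintegral_congr hball,
    lintegral_fun_norm_addHaar μ hf]
  gcongr
  calc _ ≤ _ := setLIntegral_mono' measurableSet_Ioi hradial
    _ = ENNReal.ofReal ((-Real.log ρ) ^ (-a) / a) := by
      rw [setLIntegral_indicator measurableSet_Ioo, inter_eq_left.2 Ioo_subset_Ioi_self,
        lintegral_Ioo_inv_mul_neg_log_rpow ha hρ0 hρ1]

end LogSingularity

section HeatKernel

variable {n : ℕ} {t : ℝ}

lemma norm_sub_sq_div_add_norm_sq_div {E : Type*} [NormedAddCommGroup E] [InnerProductSpace ℝ E]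
    {a b : ℝ} (ha : 0 < a) (hb : 0 < b) (x y : E) :
    ‖x - y‖ ^ 2 / a + ‖y‖ ^ 2 / b =
      ‖x‖ ^ 2 / (a + b) + ‖y - (b / (a + b)) • x‖ ^ 2 / (a * b / (a + b)) := by
  rw [norm_sub_sq_real, norm_sub_sq_real, norm_smul, real_inner_smul_right, real_inner_comm y x,
    Real.norm_of_nonneg (by positivity)]
  field_simp
  ring

lemma heatKernel_nonneg (x : EuclideanSpace ℝ (Fin n)) (ht : 0 ≤ t) : 0 ≤ heatKernel n x t := by
  unfold heatKernel
  positivity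

lemma enorm_heatKernel (x : EuclideanSpace ℝ (Fin n)) (ht : 0 ≤ t) :
    ‖heatKernel n x t‖ₑ = ENNReal.ofReal (heatKernel n x t) :=
  Real.enorm_of_nonneg (heatKernel_nonneg x ht)

@[fun_prop]
lemma measurable_heatKernel {α : Type*} [MeasurableSpace α] {f : α → EuclideanSpace ℝ (Fin n)}
    {τ : α → ℝ} (hf : Measurable f) (hτ : Measurable τ) :
    Measurable fun a => heatKernel n (f a) (τ a) := by
  unfold heatKernel
  fun_prop

lemma enorm_heatKernel_le (x : EuclideanSpace ℝ (Fin n)) (ht : 0 < t) :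
    ‖heatKernel n x t‖ₑ ≤ ENNReal.ofReal (t ^ (-(n : ℝ) / 2)) := by
  rw [enorm_heatKernel x ht.le]
  apply ENNReal.ofReal_le_ofReal
  have hexp : Real.exp (-‖x‖ ^ 2 / (4 * t)) ≤ 1 := by
    rw [Real.exp_le_one_iff, neg_div]
    exact neg_nonpos.2 (by positivity)
  have hpow : (4 * Real.pi * t) ^ (-(n : ℝ) / 2) ≤ t ^ (-(n : ℝ) / 2) := by
    refine Real.rpow_le_rpow_of_nonpos ht ?_ ?_
    · nlinarith [Real.pi_gt_three]
    · rw [neg_div]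
      exact neg_nonpos.2 (by positivity)
  calc heatKernel n x t ≤ t ^ (-(n : ℝ) / 2) * 1 := by unfold heatKernel; gcongr
    _ = t ^ (-(n : ℝ) / 2) := mul_one _

lemma lintegral_enorm_heatKernel (ht : 0 < t) :
    ∫⁻ y : EuclideanSpace ℝ (Fin n), ‖heatKernel n y t‖ₑ = 1 := by
  have hintegral : ∫ y : EuclideanSpace ℝ (Fin n), heatKernel n y t = 1 := by
    have hgauss := GaussianFourier.integral_rexp_neg_mul_sq_norm (V := EuclideanSpace ℝ (Fin n))
      (b := 1 / (4 * t)) (by positivity)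
    have hexp : ∀ y : EuclideanSpace ℝ (Fin n),
        -‖y‖ ^ 2 / (4 * t) = -(1 / (4 * t)) * ‖y‖ ^ 2 := fun y => by ring
    simp only [heatKernel, hexp]
    rw [integral_const_mul, hgauss, finrank_euclideanSpace_fin,
      show Real.pi / (1 / (4 * t)) = 4 * Real.pi * t by field_simp, ← Real.rpow_add (by positivity),
      neg_div, neg_add_cancel, Real.rpow_zero]
  have hintegrable : Integrable fun y : EuclideanSpace ℝ (Fin n) => heatKernel n y t :=
    Integrable.of_integral_ne_zero (by simp [hintegral])
  simp_rw [fun y : EuclideanSpace ℝ (Fin n) => enorm_heatKernel y ht.le]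
  rw [← ofReal_integral_eq_lintegral_ofReal hintegrable
    (Filter.Eventually.of_forall fun y => heatKernel_nonneg y ht.le), hintegral, ENNReal.ofReal_one]

lemma heatKernel_mul_heatKernel {a b : ℝ} (ha : 0 < a) (hb : 0 < b)
    (x y : EuclideanSpace ℝ (Fin n)) :
    heatKernel n (x - y) a * heatKernel n y b =
      heatKernel n x (a + b) * heatKernel n (y - (b / (a + b)) • x) (a * b / (a + b)) := by
  have hconst : (4 * Real.pi * a) ^ (-(n : ℝ) / 2) * (4 * Real.pi * b) ^ (-(n : ℝ) / 2) =
      (4 * Real.pi * (a + b)) ^ (-(n : ℝ) / 2) *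
        (4 * Real.pi * (a * b / (a + b))) ^ (-(n : ℝ) / 2) := by
    rw [← Real.mul_rpow (by positivity) (by positivity),
      ← Real.mul_rpow (by positivity) (by positivity)]
    congr 1
    field_simp
  have hexp : Real.exp (-‖x - y‖ ^ 2 / (4 * a)) * Real.exp (-‖y‖ ^ 2 / (4 * b)) =
      Real.exp (-‖x‖ ^ 2 / (4 * (a + b))) *
        Real.exp (-‖y - (b / (a + b)) • x‖ ^ 2 / (4 * (a * b / (a + b)))) := by
    rw [← Real.exp_add, ← Real.exp_add]
    congr 1
    simp only [mul_comm (4 : ℝ), ← div_div, neg_div]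
    linear_combination -(1 / 4) * norm_sub_sq_div_add_norm_sq_div ha hb x y
  unfold heatKernel
  rw [mul_mul_mul_comm, hconst, hexp, mul_mul_mul_comm]

lemma lconvolution_enorm_heatKernel {a b : ℝ} (ha : 0 < a) (hb : 0 < b) :
    (fun y => ‖heatKernel n y b‖ₑ) ⋆ₗ (fun y => ‖heatKernel n y a‖ₑ) =
      fun y => ‖heatKernel n y (a + b)‖ₑ := by
  ext x
  have hsplit : ∀ y : EuclideanSpace ℝ (Fin n), ‖heatKernel n y b‖ₑ * ‖heatKernel n (-y + x) a‖ₑ =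
      ‖heatKernel n x (a + b)‖ₑ *
        ‖heatKernel n (y - (b / (a + b)) • x) (a * b / (a + b))‖ₑ := fun y => by
    rw [← enorm_mul, ← enorm_mul, neg_add_eq_sub, mul_comm, heatKernel_mul_heatKernel ha hb]
  rw [lconvolution_def, lintegral_congr hsplit, lintegral_const_mul _ (by fun_prop),
    lintegral_sub_right_eq_self fun y => ‖heatKernel n y (a * b / (a + b))‖ₑ,
    lintegral_enorm_heatKernel (by positivity), mul_one]

end HeatKernel

section HeatSemigroup

variable {n : ℕ} {g h : EuclideanSpace ℝ (Fin n) → ℝ≥0∞} {s t : ℝ}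
  (x : EuclideanSpace ℝ (Fin n))

/-- The heat semigroup `S(t) g` of a nonnegative function `g`, as an extended nonnegative number
that needs no integrability assumption. -/
noncomputable def heatSemigroup (t : ℝ) (g : EuclideanSpace ℝ (Fin n) → ℝ≥0∞)
    (x : EuclideanSpace ℝ (Fin n)) : ℝ≥0∞ :=
  ∫⁻ y, ‖heatKernel n (x - y) t‖ₑ * g y

lemma heatSemigroup_eq_lconvolution (t : ℝ) (g : EuclideanSpace ℝ (Fin n) → ℝ≥0∞) :
    heatSemigroup t g = g ⋆ₗ fun y => ‖heatKernel n y t‖ₑ := by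
  ext x
  simp only [heatSemigroup, lconvolution_def, mul_comm (g _), neg_add_eq_sub]

@[fun_prop]
lemma measurable_heatSemigroup {α : Type*} [MeasurableSpace α]
    {f : α → EuclideanSpace ℝ (Fin n)} {τ : α → ℝ} {G : α → EuclideanSpace ℝ (Fin n) → ℝ≥0∞}
    (hτ : Measurable τ) (hG : Measurable (Function.uncurry G)) (hf : Measurable f) :
    Measurable fun a => heatSemigroup (τ a) (G a) (f a) := by
  unfold heatSemigroup
  fun_prop

lemma heatSemigroup_mono (hgh : ∀ᵐ y, g y ≤ h y) : heatSemigroup t g x ≤ heatSemigroup t h x := by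
  refine lintegral_mono_ae ?_
  filter_upwards [hgh] with y hy
  gcongr

lemma heatSemigroup_add (hg : Measurable g) :
    heatSemigroup t (fun y => g y + h y) x = heatSemigroup t g x + heatSemigroup t h x := by
  simp only [heatSemigroup, mul_add]
  exact lintegral_add_left (by fun_prop) _

lemma heatSemigroup_const_mul (c : ℝ≥0∞) (hg : Measurable g) :
    heatSemigroup t (fun y => c * g y) x = c * heatSemigroup t g x := by
  simp only [heatSemigroup, mul_left_comm _ c]
  exact lintegral_const_mul _ (by fun_prop)

lemma heatSemigroup_const (ht : 0 < t) (c : ℝ≥0∞) : heatSemigroup t (fun _ => c) x = c := by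
  rw [heatSemigroup, lintegral_mul_const _ (by fun_prop),
    lintegral_sub_left_eq_self fun y => ‖heatKernel n y t‖ₑ, lintegral_enorm_heatKernel ht, one_mul]

lemma heatSemigroup_heatSemigroup (hs : 0 < s) (ht : 0 < t) (hg : Measurable g) :
    heatSemigroup s (heatSemigroup t g) x = heatSemigroup (s + t) g x := by
  simp only [heatSemigroup_eq_lconvolution]
  rw [← lconvolution_assoc hg (by fun_prop) (by fun_prop), lconvolution_enorm_heatKernel hs ht]

lemma heatSemigroup_le_mul_lintegral (ht : 0 < t) (hg : Measurable g) :
    heatSemigroup t g x ≤ ENNReal.ofReal (t ^ (-(n : ℝ) / 2)) * ∫⁻ y, g y := by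
  rw [← lintegral_const_mul _ hg]
  exact lintegral_mono fun y => mul_le_mul_left (enorm_heatKernel_le _ ht) _

end HeatSemigroup

section Duhamel

variable {n : ℕ} {F G : ℝ → EuclideanSpace ℝ (Fin n) → ℝ≥0∞} {t : ℝ}
  (x : EuclideanSpace ℝ (Fin n))

/-- The Duhamel integral `∫₀ᵗ S(t - s) F(s) ds` of a nonnegative source term `F`. -/
noncomputable def duhamel (F : ℝ → EuclideanSpace ℝ (Fin n) → ℝ≥0∞) (t : ℝ)
    (x : EuclideanSpace ℝ (Fin n)) : ℝ≥0∞ :=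
  ∫⁻ s in Ioo 0 t, heatSemigroup (t - s) (F s) x

lemma duhamel_mono (hFG : ∀ s ∈ Ioo 0 t, ∀ y, F s y ≤ G s y) : duhamel F t x ≤ duhamel G t x :=
  setLIntegral_mono' measurableSet_Ioo fun s hs =>
    heatSemigroup_mono x (Filter.Eventually.of_forall (hFG s hs))

lemma duhamel_add (hF : Measurable (Function.uncurry F)) :
    duhamel (fun s y => F s y + G s y) t x = duhamel F t x + duhamel G t x := by
  have hsplit : ∀ s, heatSemigroup (t - s) (fun y => F s y + G s y) x =
      heatSemigroup (t - s) (F s) x + heatSemigroup (t - s) (G s) x :=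
    fun s => heatSemigroup_add x (by fun_prop)
  simp only [duhamel, hsplit]
  exact lintegral_add_left (by fun_prop) _

lemma duhamel_const_mul (c : ℝ≥0∞) (hF : Measurable (Function.uncurry F)) :
    duhamel (fun s y => c * F s y) t x = c * duhamel F t x := by
  have hscale : ∀ s, heatSemigroup (t - s) (fun y => c * F s y) x =
      c * heatSemigroup (t - s) (F s) x := fun s => heatSemigroup_const_mul x c (by fun_prop)
  simp only [duhamel, hscale]
  exact lintegral_const_mul _ (by fun_prop)

lemma duhamel_const (f : ℝ → ℝ≥0∞) : duhamel (fun s _ => f s) t x = ∫⁻ s in Ioo 0 t, f s :=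
  setLIntegral_congr_fun measurableSet_Ioo fun s hs =>
    heatSemigroup_const x (sub_pos.2 hs.2) (f s)

lemma duhamel_mul_heatSemigroup {f : ℝ → ℝ≥0∞} (hf : Measurable f)
    {g : EuclideanSpace ℝ (Fin n) → ℝ≥0∞} (hg : Measurable g) :
    duhamel (fun s y => f s * heatSemigroup s g y) t x =
      (∫⁻ s in Ioo 0 t, f s) * heatSemigroup t g x := by
  rw [← lintegral_mul_const _ hf]
  refine setLIntegral_congr_fun measurableSet_Ioo fun s hs => ?_
  simp only
  rw [heatSemigroup_const_mul x _ (by fun_prop),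
    heatSemigroup_heatSemigroup x (sub_pos.2 hs.2) hs.1 hg, sub_add_cancel]

end Duhamel

section SingularFlow

open scoped NNReal

variable {n : ℕ} {a c β p t : ℝ}

/-- The singular initial datum `|y| ^ (-n) * (log (1 / |y|)) ^ (-1 - a)` near the origin, extended
by zero. The datum of the theorem is the case `a = n / 2`. -/
noncomputable def singularProfile (n : ℕ) (a : ℝ) (y : EuclideanSpace ℝ (Fin n)) : ℝ≥0∞ :=
  ENNReal.ofReal (logSingularity n a ‖y‖)

/-- The heat flow of `singularProfile n a` damped by `(log (1 / t)) ^ (-c)`. For `a + c = n / 2` it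
has the size of the flow of `singularProfile n (n / 2)`, while the slower decay of the profile
leaves room for the nonlinear term to be absorbed. -/
noncomputable def dampedSingularFlow (n : ℕ) (a c t : ℝ) (x : EuclideanSpace ℝ (Fin n)) : ℝ≥0∞ :=
  ENNReal.ofReal ((-Real.log t) ^ (-c)) * heatSemigroup t (singularProfile n a) x

@[fun_prop]
lemma measurable_singularProfile (n : ℕ) (a : ℝ) : Measurable (singularProfile n a) :=
  ((measurable_logSingularity n a).comp measurable_norm).ennreal_ofReal

@[fun_prop]
lemma measurable_dampedSingularFlow (n : ℕ) (a c : ℝ) :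
    Measurable (Function.uncurry (dampedSingularFlow n a c)) := by
  unfold Function.uncurry dampedSingularFlow
  fun_prop

lemma singularProfile_le_indicator_add {ρ : ℝ} (ha : 0 ≤ a) (hρ : 0 < ρ)
    (y : EuclideanSpace ℝ (Fin n)) :
    singularProfile n a y ≤ (Metric.ball 0 ρ).indicator (singularProfile n a) y +
      ENNReal.ofReal (ρ ^ (-(n : ℝ))) := by
  by_cases hy : y ∈ Metric.ball 0 ρ
  · rw [indicator_of_mem hy]
    exact le_self_add
  · rw [indicator_of_notMem hy, zero_add]
    rw [mem_ball_zero_iff, not_lt] at hy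
    exact ENNReal.ofReal_le_ofReal (logSingularity_le_rpow_neg n.cast_nonneg ha hρ hy)

lemma exists_lintegral_ball_singularProfile_le (hn : 1 ≤ n) (ha : 0 < a) :
    ∃ C : ℝ≥0, ∀ ρ, 0 ≤ ρ → ρ < 1 →
      ∫⁻ y in Metric.ball 0 ρ, singularProfile n a y ≤
        C * ENNReal.ofReal ((-Real.log ρ) ^ (-a)) := by
  have : Nonempty (Fin n) := ⟨⟨0, hn⟩⟩
  obtain ⟨C, hC⟩ : ∃ C : ℝ≥0, (C : ℝ≥0∞) =
      n * volume (Metric.ball (0 : EuclideanSpace ℝ (Fin n)) 1) * ENNReal.ofReal a⁻¹ :=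
    WithTop.ne_top_iff_exists.1 (ENNReal.mul_ne_top
      (ENNReal.mul_ne_top (natCast_ne_top n) measure_ball_lt_top.ne) ofReal_ne_top)
  refine ⟨C, fun ρ hρ0 hρ1 => ?_⟩
  have hball := lintegral_ball_logSingularity_le
    (volume : Measure (EuclideanSpace ℝ (Fin n))) ha hρ0 hρ1
  rw [finrank_euclideanSpace_fin] at hball
  rwa [hC, mul_assoc, ← ENNReal.ofReal_mul (by positivity), mul_comm a⁻¹,
    ← div_eq_mul_inv]

lemma heatSemigroup_singularProfile_le_lintegral_ball_add {ρ : ℝ} (ha : 0 ≤ a) (hρ : 0 < ρ)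
    (ht : 0 < t) (x : EuclideanSpace ℝ (Fin n)) :
    heatSemigroup t (singularProfile n a) x ≤
      ENNReal.ofReal (t ^ (-(n : ℝ) / 2)) * (∫⁻ y in Metric.ball 0 ρ, singularProfile n a y) +
        ENNReal.ofReal (ρ ^ (-(n : ℝ))) := by
  have hmeas : Measurable ((Metric.ball 0 ρ).indicator (singularProfile n a)) :=
    (measurable_singularProfile n a).indicator measurableSet_ball
  refine (heatSemigroup_mono x (ae_of_all _ (singularProfile_le_indicator_add ha hρ))).trans ?_
  rw [heatSemigroup_add x hmeas, heatSemigroup_const x ht, ← lintegral_indicator measurableSet_ball]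
  gcongr
  exact heatSemigroup_le_mul_lintegral x ht hmeas

-- The singularity is cut at radius `t ^ (1 / 4)`: inside, the kernel is at most `t ^ (-n / 2)`;
-- outside, the profile is at most `t ^ (-n / 4)`, which is smaller by a power of `t`.
lemma exists_heatSemigroup_singularProfile_le (hn : 1 ≤ n) (ha : 0 < a) :
    ∃ C : ℝ≥0, ∀ t, 0 < t → t < 1 → ∀ x, heatSemigroup t (singularProfile n a) x ≤
      C * ENNReal.ofReal (t ^ (-(n : ℝ) / 2) * (-Real.log t) ^ (-a)) := by
  obtain ⟨C, hC⟩ := exists_lintegral_ball_singularProfile_le hn ha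
  refine ⟨C * Real.toNNReal ((1 / 4) ^ (-a)) + Real.toNNReal ((a / (n / 4)) ^ a),
    fun t ht0 ht1 x => ?_⟩
  set ρ := t ^ (1 / 4 : ℝ) with hρ
  have hρ1 : ρ < 1 := Real.rpow_lt_one ht0.le ht1 (by norm_num)
  have hfar : ρ ^ (-(n : ℝ)) ≤
      (a / (n / 4)) ^ a * (t ^ (-(n : ℝ) / 2) * (-Real.log t) ^ (-a)) := by
    have hsplit : ρ ^ (-(n : ℝ)) = t ^ (-(n : ℝ) / 2) * t ^ (n / 4 : ℝ) := by
      rw [hρ, ← Real.rpow_mul ht0.le, ← Real.rpow_add ht0]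
      ring_nf
    rw [hsplit, mul_left_comm]
    gcongr
    exact rpow_le_mul_neg_log_rpow_neg ha (by positivity) ht0 ht1
  calc heatSemigroup t (singularProfile n a) x
      ≤ ENNReal.ofReal (t ^ (-(n : ℝ) / 2)) * (∫⁻ y in Metric.ball 0 ρ, singularProfile n a y) +
          ENNReal.ofReal (ρ ^ (-(n : ℝ))) :=
        heatSemigroup_singularProfile_le_lintegral_ball_add ha.le (by positivity) ht0 x
    _ ≤ ENNReal.ofReal (t ^ (-(n : ℝ) / 2)) * (C * ENNReal.ofReal ((-Real.log ρ) ^ (-a))) +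
          ENNReal.ofReal ((a / (n / 4)) ^ a * (t ^ (-(n : ℝ) / 2) * (-Real.log t) ^ (-a))) := by
        gcongr
        exact hC ρ (by positivity) hρ1
    _ = _ := by
        rw [hρ, neg_log_rpow_rpow (by norm_num) ht0 ht1, ENNReal.ofReal_mul (by positivity),
          ENNReal.ofReal_mul (by positivity), ENNReal.ofReal_mul (by positivity)]
        push_cast
        simp only [ENNReal.ofReal]
        ring

lemma dampedSingularFlow_lt_top (hn : 1 ≤ n) (ha : 0 < a) (ht0 : 0 < t) (ht1 : t < 1)
    (x : EuclideanSpace ℝ (Fin n)) : dampedSingularFlow n a c t x < ∞ := by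
  obtain ⟨C, hC⟩ := exists_heatSemigroup_singularProfile_le hn ha
  exact ENNReal.mul_lt_top ofReal_lt_top ((hC t ht0 ht1 x).trans_lt (by finiteness))

lemma exists_dampedSingularFlow_le (hn : 1 ≤ n) (ha : 0 < a) (hac : a + c = n / 2) :
    ∃ C : ℝ≥0, ∀ t, 0 < t → t < 1 → ∀ x, dampedSingularFlow n a c t x ≤
      C * ENNReal.ofReal ((t * -Real.log t) ^ (-(n : ℝ) / 2)) := by
  obtain ⟨C, hC⟩ := exists_heatSemigroup_singularProfile_le hn ha
  refine ⟨C, fun t ht0 ht1 x => ?_⟩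
  have hL : 0 < -Real.log t := neg_log_pos ht0 ht1
  calc dampedSingularFlow n a c t x
      ≤ ENNReal.ofReal ((-Real.log t) ^ (-c)) *
          (C * ENNReal.ofReal (t ^ (-(n : ℝ) / 2) * (-Real.log t) ^ (-a))) := by
        unfold dampedSingularFlow
        gcongr
        exact hC t ht0 ht1 x
    _ = C * ENNReal.ofReal ((t * -Real.log t) ^ (-(n : ℝ) / 2)) := by
        rw [mul_left_comm, ← ENNReal.ofReal_mul (by positivity), mul_left_comm,
          ← Real.rpow_add hL, Real.mul_rpow ht0.le hL.le, show -c + -a = -(n : ℝ) / 2 by linarith]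

lemma exists_dampedSingularFlow_rpow_le (hn : 1 ≤ n) (ha : 0 < a) (hac : a + c = n / 2)
    (hp1 : 1 ≤ p) (hp : p ≤ 1 + 2 / n) :
    ∃ C : ℝ≥0, ∀ t, 0 < t → t < 1 → ∀ x, dampedSingularFlow n a c t x ^ p ≤
      C * ENNReal.ofReal (t * -Real.log t)⁻¹ * dampedSingularFlow n a c t x := by
  obtain ⟨C, hC⟩ := exists_dampedSingularFlow_le (c := c) hn ha hac
  have hn0 : (0 : ℝ) < n := by exact_mod_cast hn
  have hp0 : 0 ≤ p - 1 := by linarith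
  have hexponent : -1 ≤ -(n : ℝ) / 2 * (p - 1) := by
    have hle : (n : ℝ) / 2 * (p - 1) ≤ n / 2 * (2 / n) := by gcongr; linarith
    rw [div_mul_div_cancel₀ two_ne_zero, div_self hn0.ne'] at hle
    linarith
  refine ⟨C ^ (p - 1), fun t ht0 ht1 x => ?_⟩
  have htL : 0 < t * -Real.log t := mul_pos ht0 (neg_log_pos ht0 ht1)
  have hpow : dampedSingularFlow n a c t x ^ (p - 1) ≤
      (C ^ (p - 1) : ℝ≥0) * ENNReal.ofReal (t * -Real.log t)⁻¹ :=
    calc dampedSingularFlow n a c t x ^ (p - 1)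
        ≤ (C * ENNReal.ofReal ((t * -Real.log t) ^ (-(n : ℝ) / 2))) ^ (p - 1) := by
          gcongr
          exact hC t ht0 ht1 x
      _ = (C ^ (p - 1) : ℝ≥0) *
            ENNReal.ofReal ((t * -Real.log t) ^ (-(n : ℝ) / 2 * (p - 1))) := by
          rw [ENNReal.mul_rpow_of_nonneg _ _ hp0, ENNReal.coe_rpow_of_nonneg _ hp0,
            ENNReal.ofReal_rpow_of_nonneg (by positivity) hp0, ← Real.rpow_mul htL.le]
      _ ≤ (C ^ (p - 1) : ℝ≥0) * ENNReal.ofReal (t * -Real.log t)⁻¹ := by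
          rw [← Real.rpow_neg_one]
          gcongr _ * ENNReal.ofReal ?_
          exact Real.rpow_le_rpow_of_exponent_ge htL (mul_neg_log_le_one ht0 ht1) hexponent
  calc dampedSingularFlow n a c t x ^ p
      = dampedSingularFlow n a c t x ^ (p - 1) * dampedSingularFlow n a c t x := by
        rw [rpow_sub_one_mul_self hp1]
    _ ≤ _ := by gcongr

lemma exists_duhamel_dampedSingularFlow_rpow_le (hn : 1 ≤ n) (ha : 0 < a) (hc : 0 < c)
    (hac : a + c = n / 2) (hp1 : 1 ≤ p) (hp : p ≤ 1 + 2 / n) :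
    ∃ C : ℝ≥0, ∀ t, 0 < t → t < 1 → ∀ x,
      duhamel (fun s y => dampedSingularFlow n a c s y ^ p) t x ≤
        C * dampedSingularFlow n a c t x := by
  obtain ⟨C, hC⟩ := exists_dampedSingularFlow_rpow_le (c := c) hn ha hac hp1 hp
  refine ⟨C * Real.toNNReal c⁻¹, fun t ht0 ht1 x => ?_⟩
  let w : ℝ → ℝ≥0∞ := fun s => ENNReal.ofReal (s⁻¹ * (-Real.log s) ^ (-1 - c))
  have hw : Measurable w := by fun_prop
  have hsource : ∀ s ∈ Ioo 0 t, ∀ y, dampedSingularFlow n a c s y ^ p ≤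
      C * (w s * heatSemigroup s (singularProfile n a) y) := by
    intro s hs y
    have hL : 0 < -Real.log s := neg_log_pos hs.1 (hs.2.trans ht1)
    refine (hC s hs.1 (hs.2.trans ht1) y).trans_eq ?_
    rw [dampedSingularFlow, mul_assoc, ← mul_assoc (ENNReal.ofReal _) (ENNReal.ofReal _),
      ← ENNReal.ofReal_mul (by have := hs.1; positivity), mul_inv, mul_assoc s⁻¹,
      ← Real.rpow_neg_one (-Real.log s), ← Real.rpow_add hL, ← sub_eq_add_neg]
  calc duhamel (fun s y => dampedSingularFlow n a c s y ^ p) t x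
      ≤ duhamel (fun s y => C * (w s * heatSemigroup s (singularProfile n a) y)) t x :=
        duhamel_mono x hsource
    _ = C * ((∫⁻ s in Ioo 0 t, w s) * heatSemigroup t (singularProfile n a) x) := by
        rw [duhamel_const_mul x _ (by unfold Function.uncurry; fun_prop),
          duhamel_mul_heatSemigroup x hw (by fun_prop)]
    _ = _ := by
        rw [lintegral_Ioo_inv_mul_neg_log_rpow hc ht0.le ht1, div_eq_inv_mul,
          ENNReal.ofReal_mul (by positivity), dampedSingularFlow, ENNReal.coe_mul, mul_assoc,
          mul_assoc]
        rfl

lemma heatSemigroup_singularProfile_add_le (hn : 1 ≤ n) (ha : 0 ≤ a) (hc : 0 ≤ c) (hβ : 0 < β)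
    (ht0 : 0 < t) (ht1 : t < 1) (x : EuclideanSpace ℝ (Fin n)) :
    heatSemigroup t (singularProfile n (a + c)) x ≤
      ENNReal.ofReal ((β / n) ^ (-c)) * dampedSingularFlow n a c t x +
        ENNReal.ofReal (t ^ (-β)) := by
  have hn0 : (0 : ℝ) < n := by exact_mod_cast hn
  set ρ := t ^ (β / n) with hρ
  have hρ1 : ρ < 1 := Real.rpow_lt_one ht0.le ht1 (by positivity)
  have hlogρ : (-Real.log ρ) ^ (-c) = (β / n) ^ (-c) * (-Real.log t) ^ (-c) :=
    neg_log_rpow_rpow (by positivity) ht0 ht1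
  have hρn : ρ ^ (-(n : ℝ)) = t ^ (-β) := by
    rw [hρ, ← Real.rpow_mul ht0.le, mul_neg, div_mul_cancel₀ _ hn0.ne']
  have hprofile : ∀ y : EuclideanSpace ℝ (Fin n), singularProfile n (a + c) y ≤
      ENNReal.ofReal ((-Real.log ρ) ^ (-c)) * singularProfile n a y +
        ENNReal.ofReal (t ^ (-β)) := by
    intro y
    have hlogρ0 : 0 < -Real.log ρ := neg_log_pos (by positivity) hρ1
    rw [singularProfile, singularProfile, ← ENNReal.ofReal_mul (by positivity), ← hρn]
    refine (ENNReal.ofReal_le_ofReal ?_).trans ENNReal.ofReal_add_le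
    exact logSingularity_add_le hn0 ha hc (norm_nonneg y) (by positivity) hρ1
  refine (heatSemigroup_mono x (ae_of_all _ hprofile)).trans_eq ?_
  rw [heatSemigroup_add x (by fun_prop), heatSemigroup_const_mul x _ (by fun_prop),
    heatSemigroup_const x ht0, hlogρ, ENNReal.ofReal_mul (by positivity), dampedSingularFlow,
    mul_assoc]

lemma enorm_le_mul_singularProfile_add {ε K r : ℝ} (hn : 1 ≤ n) (ha : 0 ≤ a) (hε : 0 ≤ ε)
    {y : EuclideanSpace ℝ (Fin n)}
    (hr : |r| ≤ ε * ‖y‖ ^ (-(n : ℝ)) * logFac ‖y‖ ^ (-1 - a) + K) :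
    ‖r‖ₑ ≤ ENNReal.ofReal ε * singularProfile n a y + ENNReal.ofReal (ε * Real.exp n + K) := by
  have hprofile := rpow_neg_mul_logFac_rpow_le (d := n) (by exact_mod_cast hn) ha (norm_nonneg y)
  rw [singularProfile, ← ENNReal.ofReal_mul hε, Real.enorm_eq_ofReal_abs]
  refine (ENNReal.ofReal_le_ofReal ?_).trans ENNReal.ofReal_add_le
  calc |r| ≤ ε * (‖y‖ ^ (-(n : ℝ)) * logFac ‖y‖ ^ (-1 - a)) + K := by rwa [← mul_assoc]
    _ ≤ ε * (logSingularity n a ‖y‖ + Real.exp n) + K := by gcongr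
    _ = _ := by ring

lemma heatSemigroup_enorm_le {ε K : ℝ} {φ : EuclideanSpace ℝ (Fin n) → ℝ} (hn : 1 ≤ n)
    (ha : 0 ≤ a) (hc : 0 ≤ c) (hβ : 0 < β) (hε : 0 ≤ ε) (hK : 0 ≤ K)
    (hφ : ∀ᵐ y, |φ y| ≤ ε * ‖y‖ ^ (-(n : ℝ)) * logFac ‖y‖ ^ (-1 - (a + c)) + K)
    (ht0 : 0 < t) (ht1 : t < 1) (x : EuclideanSpace ℝ (Fin n)) :
    heatSemigroup t (fun y => ‖φ y‖ₑ) x ≤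
      ENNReal.ofReal ε * ENNReal.ofReal ((β / n) ^ (-c)) * dampedSingularFlow n a c t x +
        ENNReal.ofReal (ε + ε * Real.exp n + K) * ENNReal.ofReal (t ^ (-β)) := by
  have hprofile : ∀ᵐ y, ‖φ y‖ₑ ≤ ENNReal.ofReal ε * singularProfile n (a + c) y +
      ENNReal.ofReal (ε * Real.exp n + K) := by
    filter_upwards [hφ] with y hy
    exact enorm_le_mul_singularProfile_add hn (add_nonneg ha hc) hε hy
  have hone : 1 ≤ ENNReal.ofReal (t ^ (-β)) := ENNReal.one_le_ofReal.2
    (Real.one_le_rpow_of_pos_of_le_one_of_nonpos ht0 ht1.le (by linarith))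
  calc heatSemigroup t (fun y => ‖φ y‖ₑ) x
      ≤ ENNReal.ofReal ε * heatSemigroup t (singularProfile n (a + c)) x +
          ENNReal.ofReal (ε * Real.exp n + K) * 1 := by
        refine (heatSemigroup_mono x hprofile).trans_eq ?_
        rw [heatSemigroup_add x (by fun_prop), heatSemigroup_const_mul x _ (by fun_prop),
          heatSemigroup_const x ht0, mul_one]
    _ ≤ ENNReal.ofReal ε * (ENNReal.ofReal ((β / n) ^ (-c)) * dampedSingularFlow n a c t x +
          ENNReal.ofReal (t ^ (-β))) +
          ENNReal.ofReal (ε * Real.exp n + K) * ENNReal.ofReal (t ^ (-β)) := by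
        gcongr
        exact heatSemigroup_singularProfile_add_le hn ha hc hβ ht0 ht1 x
    _ = _ := by
        rw [add_assoc ε, ENNReal.ofReal_add hε (by positivity)]
        ring

end SingularFlow

section PowerNonlinearity

variable {p : ℝ}

/-- The odd power nonlinearity `|r| ^ (p - 1) * r` of the equation. -/
noncomputable def oddPower (p r : ℝ) : ℝ := |r| ^ (p - 1) * r

lemma continuous_oddPower (hp : 1 ≤ p) : Continuous (oddPower p) :=
  (continuous_abs.rpow_const fun _ => Or.inr (sub_nonneg.2 hp)).mul continuous_id

lemma monotone_oddPower (hp : 1 ≤ p) : Monotone (oddPower p) := by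
  refine monotone_of_odd_of_monotoneOn_nonneg (fun r => by simp [oddPower]) ?_
  intro r hr s _ hrs
  have hr : 0 ≤ r := hr
  unfold oddPower
  rw [abs_of_nonneg hr, abs_of_nonneg (hr.trans hrs)]
  gcongr
  exact Real.rpow_nonneg (hr.trans hrs) _

lemma enorm_oddPower (hp : 1 ≤ p) (r : ℝ) : ‖oddPower p r‖ₑ = ‖r‖ₑ ^ p := by
  rw [oddPower, enorm_mul, Real.enorm_rpow_of_nonneg (abs_nonneg r) (sub_nonneg.2 hp),
    Real.enorm_abs, rpow_sub_one_mul_self hp]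

end PowerNonlinearity

section MonotoneIteration

variable {n : ℕ} {p T t : ℝ} {φ : EuclideanSpace ℝ (Fin n) → ℝ}
  {V : ℝ → EuclideanSpace ℝ (Fin n) → ℝ≥0∞} {u v : EuclideanSpace ℝ (Fin n) → ℝ → ℝ}
  {x : EuclideanSpace ℝ (Fin n)}

/-- The integrand of the Duhamel term at `(x, t)`, as a function of the pair `(y, s)`. -/
noncomputable def duhamelIntegrand (p : ℝ) (u : EuclideanSpace ℝ (Fin n) → ℝ → ℝ)
    (x : EuclideanSpace ℝ (Fin n)) (t : ℝ) (ys : EuclideanSpace ℝ (Fin n) × ℝ) : ℝ :=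
  heatKernel n (x - ys.1) (t - ys.2) * oddPower p (u ys.1 ys.2)

/-- The map whose fixed points are the solutions in the Duhamel sense. -/
noncomputable def duhamelMap (p : ℝ) (φ : EuclideanSpace ℝ (Fin n) → ℝ)
    (u : EuclideanSpace ℝ (Fin n) → ℝ → ℝ) (x : EuclideanSpace ℝ (Fin n)) (t : ℝ) : ℝ :=
  (∫ y, heatKernel n (x - y) t * φ y) +
    ∫ ys, duhamelIntegrand p u x t ys ∂volume.prod (volume.restrict (Ioo 0 t))

/-- A finite nonnegative supersolution `V`, in the Duhamel sense, of the equation with initial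
data `|φ|` on the time interval `(0, T)`. -/
structure IsSupersolution (p T : ℝ) (φ : EuclideanSpace ℝ (Fin n) → ℝ)
    (V : ℝ → EuclideanSpace ℝ (Fin n) → ℝ≥0∞) : Prop where
  measurable : Measurable (Function.uncurry V)
  lt_top : ∀ t ∈ Ioo 0 T, ∀ x, V t x < ∞
  heatSemigroup_add_duhamel_le : ∀ t ∈ Ioo 0 T, ∀ x,
    heatSemigroup t (fun y => ‖φ y‖ₑ) x + duhamel (fun s y => V s y ^ p) t x ≤ V t x

/-- `u` is measurable and `|u| ≤ V` on the time interval `(0, T)`. -/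
structure IsDominated (T : ℝ) (V : ℝ → EuclideanSpace ℝ (Fin n) → ℝ≥0∞)
    (u : EuclideanSpace ℝ (Fin n) → ℝ → ℝ) : Prop where
  measurable : Measurable (Function.uncurry u)
  enorm_le : ∀ t ∈ Ioo 0 T, ∀ x, ‖u x t‖ₑ ≤ V t x

/-- The monotone iteration, started from the subsolution `-V`. -/
noncomputable def duhamelIterate (p : ℝ) (φ : EuclideanSpace ℝ (Fin n) → ℝ)
    (V : ℝ → EuclideanSpace ℝ (Fin n) → ℝ≥0∞) (k : ℕ) : EuclideanSpace ℝ (Fin n) → ℝ → ℝ :=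
  (duhamelMap p φ)^[k] fun x t => -(V t x).toReal

lemma duhamelIterate_succ (k : ℕ) :
    duhamelIterate p φ V (k + 1) = duhamelMap p φ (duhamelIterate p φ V k) :=
  Function.iterate_succ_apply' _ _ _

lemma measurable_duhamelIntegrand (hp : 1 ≤ p) (hu : Measurable (Function.uncurry u)) :
    Measurable fun r : (EuclideanSpace ℝ (Fin n) × ℝ) × (EuclideanSpace ℝ (Fin n) × ℝ) =>
      duhamelIntegrand p u r.1.1 r.1.2 r.2 := by
  have hpower : Measurable fun q : EuclideanSpace ℝ (Fin n) × ℝ => oddPower p (u q.1 q.2) :=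
    (continuous_oddPower hp).measurable.comp hu
  exact (measurable_heatKernel (by fun_prop) (by fun_prop)).mul (hpower.comp measurable_snd)

lemma measurable_duhamelMap (hp : 1 ≤ p) (hφ : Measurable φ)
    (hu : Measurable (Function.uncurry u)) :
    Measurable (Function.uncurry (duhamelMap p φ u)) := by
  have hlinear : Measurable fun q : EuclideanSpace ℝ (Fin n) × ℝ =>
      ∫ y, heatKernel n (q.1 - y) q.2 * φ y := by
    have h : Measurable fun r : (EuclideanSpace ℝ (Fin n) × ℝ) × EuclideanSpace ℝ (Fin n) =>
        heatKernel n (r.1.1 - r.2) r.1.2 * φ r.2 := by fun_prop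
    exact h.stronglyMeasurable.integral_prod_right'.measurable
  have hstrip : MeasurableSet
      {r : (EuclideanSpace ℝ (Fin n) × ℝ) × (EuclideanSpace ℝ (Fin n) × ℝ) |
        r.2.2 ∈ Ioo 0 r.1.2} := by
    simp only [mem_Ioo, ofPred_and]
    exact (measurableSet_lt (by fun_prop) (by fun_prop)).inter
      (measurableSet_lt (by fun_prop) (by fun_prop))
  refine hlinear.add ?_
  simp only [prod_restrict_eq_restrict_univ_prod]
  convert measurable_setIntegral_prodMk_preimage hstrip (measurable_duhamelIntegrand hp hu)
    (ν := volume.prod volume) using 5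
  ext ys
  simp

lemma lintegral_enorm_duhamelIntegrand_le (hp : 1 ≤ p) (hu : IsDominated T V u)
    (ht : t ≤ T) :
    ∫⁻ ys, ‖duhamelIntegrand p u x t ys‖ₑ ∂volume.prod (volume.restrict (Ioo 0 t)) ≤
      duhamel (fun s y => V s y ^ p) t x := by
  have hmeas : Measurable (duhamelIntegrand p u x t) :=
    (measurable_duhamelIntegrand hp hu.measurable).comp (measurable_prodMk_left (x := (x, t)))
  rw [lintegral_prod_symm' _ hmeas.enorm]
  refine setLIntegral_mono' measurableSet_Ioo fun s hs => lintegral_mono fun y => ?_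
  simp only [duhamelIntegrand, enorm_mul, enorm_oddPower hp]
  gcongr
  exact hu.enorm_le s ⟨hs.1, hs.2.trans_le ht⟩ y

namespace IsSupersolution

variable (hV : IsSupersolution p T φ V)
include hV

lemma integrable_heatKernel_mul (hφ : Measurable φ) (ht : t ∈ Ioo 0 T) :
    Integrable fun y => heatKernel n (x - y) t * φ y := by
  refine ⟨(by fun_prop : Measurable _).aestronglyMeasurable, ?_⟩
  simp only [HasFiniteIntegral, enorm_mul]
  exact (le_self_add.trans (hV.heatSemigroup_add_duhamel_le t ht x)).trans_lt (hV.lt_top t ht x)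

lemma integrable_duhamelIntegrand (hp : 1 ≤ p) (hu : IsDominated T V u) (ht : t ∈ Ioo 0 T) :
    Integrable (duhamelIntegrand p u x t) (volume.prod (volume.restrict (Ioo 0 t))) := by
  refine ⟨((measurable_duhamelIntegrand hp hu.measurable).comp
    (measurable_prodMk_left (x := (x, t)))).aestronglyMeasurable, ?_⟩
  exact (((lintegral_enorm_duhamelIntegrand_le hp hu ht.2.le).trans le_add_self).trans
    (hV.heatSemigroup_add_duhamel_le t ht x)).trans_lt (hV.lt_top t ht x)

lemma isDominated_duhamelMap (hp : 1 ≤ p) (hφ : Measurable φ) (hu : IsDominated T V u) :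
    IsDominated T V (duhamelMap p φ u) where
  measurable := measurable_duhamelMap hp hφ hu.measurable
  enorm_le t ht x := by
    have hlinear : ‖∫ y, heatKernel n (x - y) t * φ y‖ₑ ≤
        heatSemigroup t (fun y => ‖φ y‖ₑ) x := by
      simpa only [heatSemigroup, enorm_mul] using enorm_integral_le_lintegral_enorm
        (μ := volume) fun y => heatKernel n (x - y) t * φ y
    calc ‖duhamelMap p φ u x t‖ₑ
        ≤ heatSemigroup t (fun y => ‖φ y‖ₑ) x + duhamel (fun s y => V s y ^ p) t x :=
          (enorm_add_le _ _).trans (add_le_add hlinear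
            ((enorm_integral_le_lintegral_enorm _).trans
              (lintegral_enorm_duhamelIntegrand_le hp hu ht.2.le)))
      _ ≤ V t x := hV.heatSemigroup_add_duhamel_le t ht x

lemma duhamelMap_mono (hp : 1 ≤ p) (hu : IsDominated T V u) (hv : IsDominated T V v)
    (huv : ∀ t ∈ Ioo 0 T, ∀ x, u x t ≤ v x t) (ht : t ∈ Ioo 0 T) :
    duhamelMap p φ u x t ≤ duhamelMap p φ v x t := by
  refine add_le_add_right (integral_mono_ae (hV.integrable_duhamelIntegrand hp hu ht)
    (hV.integrable_duhamelIntegrand hp hv ht) ?_) _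
  refine ae_prod_restrict_of_forall_mem measurableSet_Ioo fun y s hs => ?_
  exact mul_le_mul_of_nonneg_left (monotone_oddPower hp (huv s ⟨hs.1, hs.2.trans ht.2⟩ y))
    (heatKernel_nonneg _ (sub_nonneg.2 hs.2.le))

lemma tendsto_duhamelMap {w : ℕ → EuclideanSpace ℝ (Fin n) → ℝ → ℝ} (hp : 1 ≤ p)
    (hw : ∀ k, IsDominated T V (w k)) (hu : IsDominated T V u)
    (hmono : ∀ t ∈ Ioo 0 T, ∀ x, Monotone fun k => w k x t)
    (hlim : ∀ t ∈ Ioo 0 T, ∀ x, Filter.Tendsto (fun k => w k x t) Filter.atTop (nhds (u x t)))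
    (ht : t ∈ Ioo 0 T) :
    Filter.Tendsto (fun k => duhamelMap p φ (w k) x t) Filter.atTop
      (nhds (duhamelMap p φ u x t)) := by
  refine (integral_tendsto_of_tendsto_of_monotone
    (fun k => hV.integrable_duhamelIntegrand hp (hw k) ht)
    (hV.integrable_duhamelIntegrand hp hu ht) ?_ ?_).const_add _
  · refine ae_prod_restrict_of_forall_mem measurableSet_Ioo fun y s hs i j hij => ?_
    exact mul_le_mul_of_nonneg_left
      (monotone_oddPower hp (hmono s ⟨hs.1, hs.2.trans ht.2⟩ y hij))
      (heatKernel_nonneg _ (sub_nonneg.2 hs.2.le))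
  · refine ae_prod_restrict_of_forall_mem measurableSet_Ioo fun y s hs => ?_
    exact (((continuous_oddPower hp).tendsto _).comp
      (hlim s ⟨hs.1, hs.2.trans ht.2⟩ y)).const_mul _

lemma abs_le_toReal (hu : IsDominated T V u) (ht : t ∈ Ioo 0 T) : |u x t| ≤ (V t x).toReal := by
  rw [← ENNReal.ofReal_le_iff_le_toReal (hV.lt_top t ht x).ne, ← Real.enorm_eq_ofReal_abs]
  exact hu.enorm_le t ht x

lemma isSolution_of_eq_duhamelMap (hp : 1 ≤ p) (hφ : Measurable φ) (hu : IsDominated T V u)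
    (hfix : ∀ t ∈ Ioo 0 T, ∀ x, u x t = duhamelMap p φ u x t) : IsSolution n p T φ u := by
  refine ⟨hu.measurable, ae_prod_restrict_of_forall_mem measurableSet_Ioo fun x t ht => ?_⟩
  have hintegral := hV.integrable_duhamelIntegrand (x := x) hp hu ht
  refine ⟨hV.integrable_heatKernel_mul hφ ht, hintegral, ?_⟩
  rw [hfix t ht x, duhamelMap, integral_prod_symm _ hintegral]
  rfl

lemma isDominated_duhamelIterate (hp : 1 ≤ p) (hφ : Measurable φ) (k : ℕ) :
    IsDominated T V (duhamelIterate p φ V k) := by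
  induction k with
  | zero =>
    refine ⟨(hV.measurable.comp measurable_swap).ennreal_toReal.neg, fun t _ x => ?_⟩
    rw [duhamelIterate, Function.iterate_zero_apply, enorm_neg, Real.enorm_of_nonneg toReal_nonneg]
    exact ofReal_toReal_le
  | succ k ih =>
    rw [duhamelIterate_succ]
    exact hV.isDominated_duhamelMap hp hφ ih

lemma monotone_duhamelIterate (hp : 1 ≤ p) (hφ : Measurable φ) (ht : t ∈ Ioo 0 T) :
    Monotone fun k => duhamelIterate p φ V k x t := by
  refine monotone_nat_of_le_succ fun k => ?_
  induction k generalizing x t with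
  | zero => exact (abs_le.1 (hV.abs_le_toReal (hV.isDominated_duhamelIterate hp hφ 1) ht)).1
  | succ k ih =>
    rw [duhamelIterate_succ (k + 1)]
    conv_lhs => rw [duhamelIterate_succ k]
    exact hV.duhamelMap_mono hp (hV.isDominated_duhamelIterate hp hφ k)
      (hV.isDominated_duhamelIterate hp hφ (k + 1)) (fun t ht x => ih ht) ht

theorem exists_isSolution (hp : 1 ≤ p) (hφ : Measurable φ) : ∃ u, IsSolution n p T φ u := by
  have hdom := hV.isDominated_duhamelIterate hp hφ
  let u : EuclideanSpace ℝ (Fin n) → ℝ → ℝ := fun x t => ⨆ k, duhamelIterate p φ V k x t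
  have hlim : ∀ t ∈ Ioo 0 T, ∀ x,
      Filter.Tendsto (fun k => duhamelIterate p φ V k x t) Filter.atTop (nhds (u x t)) := by
    refine fun t ht x =>
      tendsto_atTop_ciSup (hV.monotone_duhamelIterate hp hφ ht) ⟨(V t x).toReal, ?_⟩
    rintro _ ⟨k, rfl⟩
    exact (abs_le.1 (hV.abs_le_toReal (hdom k) ht)).2
  have hu : IsDominated T V u := by
    refine ⟨Measurable.iSup fun k => (hdom k).measurable, fun t ht x => ?_⟩
    exact le_of_tendsto ((continuous_enorm.tendsto _).comp (hlim t ht x))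
      (Filter.Eventually.of_forall fun k => (hdom k).enorm_le t ht x)
  refine ⟨u, hV.isSolution_of_eq_duhamelMap hp hφ hu fun t ht x => ?_⟩
  refine tendsto_nhds_unique ((hlim t ht x).comp (Filter.tendsto_add_atTop_nat 1)) ?_
  simp only [Function.comp_def, duhamelIterate_succ]
  exact hV.tendsto_duhamelMap hp hdom hu (fun t ht x => hV.monotone_duhamelIterate hp hφ ht) hlim ht

end IsSupersolution

end MonotoneIteration

section Existence

open scoped NNReal

variable {n : ℕ} {a c p T : ℝ}

lemma isSupersolution_two_mul_add {φ : EuclideanSpace ℝ (Fin n) → ℝ}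
    {Z : ℝ → EuclideanSpace ℝ (Fin n) → ℝ≥0∞} {m : ℝ → ℝ≥0∞} (hp : 0 ≤ p)
    (hZ : Measurable (Function.uncurry Z)) (hm : Measurable m)
    (hZ_top : ∀ t ∈ Ioo 0 T, ∀ x, Z t x < ∞) (hm_top : ∀ t ∈ Ioo 0 T, m t < ∞)
    (hφ : ∀ t ∈ Ioo 0 T, ∀ x, heatSemigroup t (fun y => ‖φ y‖ₑ) x ≤ Z t x + m t)
    (hZ_le : ∀ t ∈ Ioo 0 T, ∀ x, 4 ^ p * duhamel (fun s y => Z s y ^ p) t x ≤ Z t x)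
    (hm_le : ∀ t ∈ Ioo 0 T, 4 ^ p * ∫⁻ s in Ioo 0 t, m s ^ p ≤ m t) :
    IsSupersolution p T φ fun t x => 2 * (Z t x + m t) where
  measurable := by
    unfold Function.uncurry
    fun_prop
  lt_top t ht x :=
    ENNReal.mul_lt_top ofNat_lt_top (ENNReal.add_lt_top.2 ⟨hZ_top t ht x, hm_top t ht⟩)
  heatSemigroup_add_duhamel_le t ht x := by
    have hZp : Measurable (Function.uncurry fun s y => Z s y ^ p) := hZ.pow_const p
    have hsum : Measurable (Function.uncurry fun s y => Z s y ^ p + m s ^ p) := by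
      unfold Function.uncurry
      fun_prop
    have hsource : duhamel (fun s y => (2 * (Z s y + m s)) ^ p) t x ≤ Z t x + m t :=
      calc duhamel (fun s y => (2 * (Z s y + m s)) ^ p) t x
          ≤ duhamel (fun s y => 4 ^ p * (Z s y ^ p + m s ^ p)) t x :=
            duhamel_mono x fun s _ y => two_mul_add_rpow_le hp _ _
        _ = 4 ^ p * duhamel (fun s y => Z s y ^ p) t x + 4 ^ p * ∫⁻ s in Ioo 0 t, m s ^ p := by
            rw [duhamel_const_mul x _ hsum, duhamel_add x hZp, duhamel_const x, mul_add]
        _ ≤ Z t x + m t := add_le_add (hZ_le t ht x) (hm_le t ht)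
    rw [two_mul]
    exact add_le_add (hφ t ht x) hsource

lemma exists_four_rpow_mul_duhamel_dampedSingularFlow_le (hn : 1 ≤ n) (ha : 0 < a) (hc : 0 < c)
    (hac : a + c = n / 2) (hp1 : 1 < p) (hp : p ≤ 1 + 2 / n) (D : ℝ≥0) :
    ∃ ε : ℝ, 0 < ε ∧ ∀ t, 0 < t → t < 1 → ∀ x,
      4 ^ p * duhamel (fun s y => (ENNReal.ofReal ε * D * dampedSingularFlow n a c s y) ^ p) t x ≤
        ENNReal.ofReal ε * D * dampedSingularFlow n a c t x := by
  obtain ⟨C, hC⟩ := exists_duhamel_dampedSingularFlow_rpow_le (c := c) hn ha hc hac hp1.le hp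
  have hp0 : 0 < p - 1 := sub_pos.2 hp1
  have htop : 4 ^ p * C * (D : ℝ≥0∞) ^ (p - 1) ≠ ∞ := by finiteness
  obtain ⟨ε, hε0, -, hε⟩ := exists_pos_mul_ofReal_rpow_le_one htop hp0
  refine ⟨ε, hε0, fun t ht0 ht1 x => ?_⟩
  set e := ENNReal.ofReal ε * D with he
  have hmeas : Measurable (Function.uncurry fun s y => dampedSingularFlow n a c s y ^ p) :=
    (measurable_dampedSingularFlow n a c).pow_const p
  calc 4 ^ p * duhamel (fun s y => (e * dampedSingularFlow n a c s y) ^ p) t x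
      = 4 ^ p * (e ^ p * duhamel (fun s y => dampedSingularFlow n a c s y ^ p) t x) := by
        simp only [ENNReal.mul_rpow_of_nonneg _ _ (zero_le_one.trans hp1.le)]
        rw [duhamel_const_mul x _ hmeas]
    _ ≤ 4 ^ p * (e ^ p * (C * dampedSingularFlow n a c t x)) := by
        gcongr
        exact hC t ht0 ht1 x
    _ = 4 ^ p * C * (D : ℝ≥0∞) ^ (p - 1) * ENNReal.ofReal ε ^ (p - 1) *
          (e * dampedSingularFlow n a c t x) := by
        rw [← rpow_sub_one_mul_self hp1.le e, he, ENNReal.mul_rpow_of_nonneg _ _ hp0.le]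
        ring
    _ ≤ e * dampedSingularFlow n a c t x := mul_le_of_le_one_left zero_le hε

lemma exists_four_rpow_mul_lintegral_rpow_le (hp : 1 ≤ p) (κ : ℝ≥0) :
    ∃ T : ℝ, 0 < T ∧ T < 1 ∧ ∀ t ∈ Ioo 0 T,
      4 ^ p * ∫⁻ s in Ioo 0 t, (κ * ENNReal.ofReal (s ^ (-(1 / (2 * p))))) ^ p ≤
        κ * ENNReal.ofReal (t ^ (-(1 / (2 * p)))) := by
  have hp0 : 0 < p := zero_lt_one.trans_le hp
  have htop : 4 ^ p * (κ : ℝ≥0∞) ^ (p - 1) * 2 ≠ ∞ := by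
    have := sub_nonneg.2 hp
    finiteness
  obtain ⟨T, hT0, hT1, hT⟩ := exists_pos_mul_ofReal_rpow_le_one htop one_half_pos
  refine ⟨T, hT0, hT1, fun t ht => ?_⟩
  have hpow : ∀ s ∈ Ioo 0 t, (κ * ENNReal.ofReal (s ^ (-(1 / (2 * p))))) ^ p =
      (κ : ℝ≥0∞) ^ p * ENNReal.ofReal (s ^ (-(1 / 2) : ℝ)) := by
    intro s hs
    have hs0 : 0 < s := hs.1
    rw [ENNReal.mul_rpow_of_nonneg _ _ hp0.le, ENNReal.ofReal_rpow_of_nonneg (by positivity) hp0.le,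
      ← Real.rpow_mul hs0.le]
    field_simp
  have hintegral : ∫⁻ s in Ioo 0 t, ENNReal.ofReal (s ^ (-(1 / 2) : ℝ)) =
      2 * ENNReal.ofReal t ^ (1 / 2 : ℝ) := by
    rw [lintegral_Ioo_rpow (by norm_num) ht.1.le, ENNReal.ofReal_rpow_of_pos ht.1,
      ← ENNReal.ofReal_ofNat, ← ENNReal.ofReal_mul zero_le_two]
    ring_nf
  have hone : 1 ≤ ENNReal.ofReal (t ^ (-(1 / (2 * p)))) := ENNReal.one_le_ofReal.2
    (Real.one_le_rpow_of_pos_of_le_one_of_nonpos ht.1 (ht.2.trans hT1).le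
      (neg_nonpos.2 (by positivity)))
  calc 4 ^ p * ∫⁻ s in Ioo 0 t, (κ * ENNReal.ofReal (s ^ (-(1 / (2 * p))))) ^ p
      = 4 ^ p * (κ : ℝ≥0∞) ^ (p - 1) * 2 * ENNReal.ofReal t ^ (1 / 2 : ℝ) * κ := by
        rw [setLIntegral_congr_fun measurableSet_Ioo hpow, lintegral_const_mul _ (by fun_prop),
          hintegral, ← rpow_sub_one_mul_self hp (κ : ℝ≥0∞)]
        ring
    _ ≤ 4 ^ p * (κ : ℝ≥0∞) ^ (p - 1) * 2 * ENNReal.ofReal T ^ (1 / 2 : ℝ) * κ := by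
        gcongr
        exact ht.2.le
    _ ≤ 1 * κ := by gcongr
    _ ≤ κ * ENNReal.ofReal (t ^ (-(1 / (2 * p)))) := by
        rw [mul_comm]
        gcongr

end Existence

theorem stmt2_general (n : ℕ) (hn : 1 ≤ n) (p : ℝ) (hp1 : 1 < p) (hp : p ≤ 1 + 2 / n) :
    ∃ ε > (0 : ℝ), ∀ φ : EuclideanSpace ℝ (Fin n) → ℝ, Measurable φ →
      (∃ K ≥ (0 : ℝ), ∀ᵐ x : EuclideanSpace ℝ (Fin n) ∂volume,
        |φ x| ≤ ε * ‖x‖ ^ (-(n : ℝ)) * logFac ‖x‖ ^ (-(n : ℝ) / 2 - 1) + K) →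
      ∃ T > (0 : ℝ), ∃ u : EuclideanSpace ℝ (Fin n) → ℝ → ℝ, IsSolution n p T φ u := by
  have ha : (0 : ℝ) < n / 4 := by positivity
  have hac : (n / 4 + n / 4 : ℝ) = n / 2 := by ring
  have hβ : 0 < 1 / (2 * p) := by positivity
  obtain ⟨ε, hε, hZ⟩ := exists_four_rpow_mul_duhamel_dampedSingularFlow_le hn ha ha hac hp1 hp
    (Real.toNNReal ((1 / (2 * p) / n) ^ (-(n / 4 : ℝ))))
  refine ⟨ε, hε, fun φ hφ => ?_⟩
  rintro ⟨K, hK, hbound⟩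
  rw [show -(n : ℝ) / 2 - 1 = -1 - (n / 4 + n / 4) by ring] at hbound
  obtain ⟨T, hT0, hT1, hm⟩ := exists_four_rpow_mul_lintegral_rpow_le hp1.le
    (Real.toNNReal (ε + ε * Real.exp n + K))
  refine ⟨T, hT0, (isSupersolution_two_mul_add (by positivity) (by fun_prop) (by fun_prop)
    (fun t ht x => ?_) (fun _ _ => ?_) (fun t ht => ?_)
    (fun t ht => hZ t ht.1 (ht.2.trans hT1)) hm).exists_isSolution hp1.le hφ⟩
  · exact ENNReal.mul_lt_top (by finiteness)
      (dampedSingularFlow_lt_top hn ha ht.1 (ht.2.trans hT1) x)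
  · finiteness
  · exact heatSemigroup_enorm_le hn ha.le ha.le hβ hε.le hK hbound ht.1 (ht.2.trans hT1)

theorem stmt2 (n : ℕ) (hn : 1 ≤ n) (p : ℝ) (hp : p = 1 + 2 / n) :
    ∃ ε > (0 : ℝ), ∀ φ : EuclideanSpace ℝ (Fin n) → ℝ, Measurable φ →
      (∃ K ≥ (0 : ℝ), ∀ᵐ x : EuclideanSpace ℝ (Fin n) ∂volume,
        |φ x| ≤ ε * ‖x‖ ^ (-(n : ℝ)) * logFac ‖x‖ ^ (-(n : ℝ) / 2 - 1) + K) →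
      ∃ T > (0 : ℝ), ∃ u : EuclideanSpace ℝ (Fin n) → ℝ → ℝ, IsSolution n p T φ u :=
  stmt2_general n hn p (by rw [hp]; exact lt_add_of_pos_right 1 (by positivity)) hp.le
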